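/- Under assumption (B2), let (vₙ)ₙ and (wₙ)ₙ be sequences of words in 𝒲 with |vₙ| → ∞ and |wₙ| → ∞ such that lim_{n→∞} k(u,vₙ) and lim_{n→∞} k(u,wₙ) exist for every u ∈ 𝒲. Then lim_{n→∞} k(u,vₙ) = lim_{n→∞} k(u,wₙ) for every u ∈ 𝒲 if and only if lim_{n→∞} k_hom(u,vₙ) = lim_{n→∞} k_hom(u,wₙ) for every u ∈ 𝒲. (That is, the equivalence relations identifying Cauchy sequences in the inhomogeneous and homogeneous Martin compactifications are identical.) -/

import Mathlib

open Classical

namespace Martin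

/-- Finite words over the alphabet `Fin N` (the empty list is the empty word `∅`;
`w ++ [i]` is the word `wi` and `w.dropLast` is the parent `w⁻`). -/
abbrev Word (N : ℕ) := List (Fin N)

/-- The mass of a word: `m(w₁⋯wₙ) = m(w₁)⋯m(wₙ)`, `m(∅) = 1`. -/
noncomputable def mW {N : ℕ} (m : Fin N → ℝ) (w : Word N) : ℝ := (w.map m).prod

/-- Total mass of the equivalence class of `v`: `Σ_{v̂ ∼ v} m(v̂)`. -/
noncomputable def massCl {N : ℕ} (sim : Word N → Word N → Prop) (m : Fin N → ℝ)
    (v : Word N) : ℝ :=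
  ∑ᶠ u ∈ {u : Word N | sim u v}, mW m u

/-- Transition probability: `p(v,w) = m(w)/(Σ_{v̂∼v} m(v̂))` if `w = v̂i` for some
`v̂ ∼ v`, `i ∈ 𝒜`, and `0` otherwise. -/
noncomputable def pTrans {N : ℕ} (sim : Word N → Word N → Prop) (m : Fin N → ℝ)
    (v w : Word N) : ℝ :=
  if ∃ v' : Word N, ∃ i : Fin N, sim v' v ∧ w = v' ++ [i] then mW m w / massCl sim m v
  else 0

/-- `n`-step transition probabilities: `p₀(v,w) = δ_v(w)`,
`pₙ(v,w) = Σ_u pₙ₋₁(v,u) p(u,w)`. -/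
noncomputable def pn {N : ℕ} (sim : Word N → Word N → Prop) (m : Fin N → ℝ) :
    ℕ → Word N → Word N → ℝ
  | 0, v, w => if w = v then 1 else 0
  | n + 1, v, w => ∑ᶠ u : Word N, pn sim m n v u * pTrans sim m u w

/-- The Green function `g(v,w) = p_{|w|−|v|}(v,w)` (it equals `0` when `|w| < |v|`,
by truncated subtraction and since then `v ≠ w`). -/
noncomputable def green {N : ℕ} (sim : Word N → Word N → Prop) (m : Fin N → ℝ)
    (v w : Word N) : ℝ :=
  pn sim m (w.length - v.length) v w

/-- The function `q(v,w) = g(v,w)·(Σ_{v̂∼v} m(v̂))/m(w)` for `v ≠ w`, `q(v,v) = 1`. -/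
noncomputable def qfun {N : ℕ} (sim : Word N → Word N → Prop) (m : Fin N → ℝ)
    (v w : Word N) : ℝ :=
  if v = w then 1 else green sim m v w * massCl sim m v / mW m w

/-- The Martin kernel `k(v,w) = g(v,w)/g(∅,w)`. -/
noncomputable def mkernel {N : ℕ} (sim : Word N → Word N → Prop) (m : Fin N → ℝ)
    (v w : Word N) : ℝ :=
  green sim m v w / green sim m [] w

/-- `R(w)`: the number of words equivalent to `w`. -/
noncomputable def Rnum {N : ℕ} (sim : Word N → Word N → Prop) (w : Word N) : ℕ :=
  Set.ncard {u : Word N | sim u w}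

/-- Assumption (B2): for every word `w`, either all equivalent words have the same mass,
or all equivalent words have equivalent parents. -/
def B2 {N : ℕ} (sim : Word N → Word N → Prop) (m : Fin N → ℝ) : Prop :=
  ∀ w : Word N, (∀ w', sim w' w → mW m w' = mW m w) ∨
    (∀ w', sim w' w → sim w'.dropLast w.dropLast)


section helpers

variable {N : ℕ} {sim : Word N → Word N → Prop}

lemma cls_finite (hlen : ∀ v w : Word N, sim v w → v.length = w.length) (w : Word N) :
    {u : Word N | sim u w}.Finite :=
  (List.finite_length_eq (Fin N) w.length).subset fun u hu => hlen u w hu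

lemma mW_pos {m : Fin N → ℝ} (hm : ∀ a, 0 < m a) (w : Word N) : 0 < mW m w := by
  unfold mW
  apply List.prod_pos
  intro a ha
  obtain ⟨b, -, rfl⟩ := List.mem_map.1 ha
  exact hm b

lemma massCl_eq (hlen : ∀ v w : Word N, sim v w → v.length = w.length) (m : Fin N → ℝ)
    (w : Word N) : massCl sim m w = ∑ u ∈ (cls_finite hlen w).toFinset, mW m u :=
  finsum_mem_eq_finite_toFinset_sum _ _

lemma massCl_pos (hsim : Equivalence sim)
    (hlen : ∀ v w : Word N, sim v w → v.length = w.length) {m : Fin N → ℝ}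
    (hm : ∀ a, 0 < m a) (w : Word N) : 0 < massCl sim m w := by
  rw [massCl_eq hlen]
  exact Finset.sum_pos (fun u _ => mW_pos hm u) ⟨w, by simpa using hsim.refl w⟩

lemma cls_congr (hsim : Equivalence sim) {u w : Word N} (h : sim u w) :
    {x : Word N | sim x u} = {x : Word N | sim x w} := by
  ext x
  exact ⟨fun hx => hsim.trans hx h, fun hx => hsim.trans hx (hsim.symm h)⟩

lemma massCl_congr (hsim : Equivalence sim) (m : Fin N → ℝ) {u w : Word N} (h : sim u w) :
    massCl sim m u = massCl sim m w := by
  unfold massCl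
  rw [cls_congr hsim h]

lemma pTrans_nil (m : Fin N → ℝ) (u : Word N) : pTrans sim m u [] = 0 := by
  unfold pTrans
  rw [if_neg]
  rintro ⟨v', i, -, h⟩
  simp at h

lemma pTrans_concat (hsim : Equivalence sim) (m : Fin N → ℝ) (u w : Word N) (i : Fin N) :
    pTrans sim m u (w ++ [i]) =
      if sim u w then mW m (w ++ [i]) / massCl sim m w else 0 := by
  unfold pTrans
  by_cases h : sim u w
  · rw [if_pos ⟨w, i, hsim.symm h, rfl⟩, if_pos h, massCl_congr hsim m h]
  · rw [if_neg, if_neg h]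
    rintro ⟨v', j, h1, h2⟩
    have := List.append_inj_left' h2 rfl
    subst this
    exact h (hsim.symm h1)

/-- green over mass -/
noncomputable def rr (sim : Word N → Word N → Prop) (m : Fin N → ℝ) (n : ℕ) (v w : Word N) : ℝ :=
  pn sim m n v w / mW m w

lemma rr_nil (m : Fin N → ℝ) (n : ℕ) (v : Word N) : rr sim m (n+1) v [] = 0 := by
  simp [rr, pn, pTrans_nil]

lemma rr_concat (hsim : Equivalence sim)
    (hlen : ∀ v w : Word N, sim v w → v.length = w.length) {m : Fin N → ℝ}
    (hm : ∀ a, 0 < m a) (n : ℕ) (v w : Word N) (i : Fin N) :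
    rr sim m (n+1) v (w ++ [i]) =
      (∑ u ∈ (cls_finite hlen w).toFinset, pn sim m n v u) / massCl sim m w := by
  have h1 := (mW_pos hm (w ++ [i])).ne'
  unfold rr
  rw [pn, finsum_eq_sum_of_support_subset (s := (cls_finite hlen w).toFinset)]
  · rw [Finset.sum_congr rfl (g := fun u => pn sim m n v u * (mW m (w ++ [i]) / massCl sim m w))]
    · rw [← Finset.sum_mul]
      field_simp
    · intro u hu
      rw [pTrans_concat hsim, if_pos (by simpa using hu)]
  · intro u hu
    by_contra h
    apply hu
    simp only [pTrans_concat hsim]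
    rw [if_neg (by simpa using h), mul_zero]

lemma rr_concat' (hsim : Equivalence sim)
    (hlen : ∀ v w : Word N, sim v w → v.length = w.length) {m : Fin N → ℝ}
    (hm : ∀ a, 0 < m a) (n : ℕ) (v w : Word N) (i : Fin N) :
    rr sim m (n+1) v (w ++ [i]) =
      (∑ u ∈ (cls_finite hlen w).toFinset, rr sim m n v u * mW m u) /
        ∑ u ∈ (cls_finite hlen w).toFinset, mW m u := by
  rw [rr_concat hsim hlen hm, massCl_eq hlen]
  congr 1
  refine Finset.sum_congr rfl fun u _ => ?_
  rw [rr, div_mul_cancel₀ _ (mW_pos hm u).ne']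

lemma rr_congr (hsim : Equivalence sim)
    (hlen : ∀ v w : Word N, sim v w → v.length = w.length) {m : Fin N → ℝ}
    (hm : ∀ a, 0 < m a) (n : ℕ) (v : Word N) {u w : Word N} (h : sim u w)
    (h' : sim u.dropLast w.dropLast) : rr sim m (n+1) v u = rr sim m (n+1) v w := by
  have hl := hlen _ _ h
  rcases List.eq_nil_or_concat' u with rfl | ⟨u', i, rfl⟩
  · rw [List.length_nil, eq_comm, List.length_eq_zero_iff] at hl
    rw [hl]
  · rcases List.eq_nil_or_concat' w with rfl | ⟨w', j, rfl⟩
    · simp at hl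
    · rw [List.dropLast_concat, List.dropLast_concat] at h'
      rw [rr_concat' hsim hlen hm, rr_concat' hsim hlen hm]
      have : (cls_finite hlen u').toFinset = (cls_finite hlen w').toFinset := by
        rw [Set.Finite.toFinset_inj]
        exact cls_congr hsim h'
      rw [this]

lemma avg {ι : Type*} {s : Finset ι} (hs : s.Nonempty) (F m h : ι → ℝ) {c d : ℝ}
    (hm : ∀ i, 0 < m i) (hd : 0 < d) (hh : ∀ i ∈ s, h i = d)
    (H : (∀ i ∈ s, m i = c) ∨ ∀ i ∈ s, F i = c) :
    (∑ i ∈ s, F i * m i) / (∑ i ∈ s, m i) = (∑ i ∈ s, F i * h i) / ∑ i ∈ s, h i := by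
  have e1 : (∑ i ∈ s, m i) ≠ 0 := (Finset.sum_pos (fun i _ => hm i) hs).ne'
  have e2 : (∑ i ∈ s, h i) ≠ 0 :=
    (Finset.sum_pos (fun i hi => by rw [hh i hi]; exact hd) hs).ne'
  rw [div_eq_div_iff e1 e2]
  have hF : ∑ i ∈ s, F i * h i = (∑ i ∈ s, F i) * d := by
    rw [Finset.sum_mul]; exact Finset.sum_congr rfl fun i hi => by rw [hh i hi]
  have hH : ∑ i ∈ s, h i = s.card * d := by
    rw [Finset.sum_congr rfl hh]; simp
  rcases H with H | H
  · have hF' : ∑ i ∈ s, F i * m i = (∑ i ∈ s, F i) * c := by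
      rw [Finset.sum_mul]; exact Finset.sum_congr rfl fun i hi => by rw [H i hi]
    have hH' : ∑ i ∈ s, m i = s.card * c := by
      rw [Finset.sum_congr rfl H]; simp
    rw [hF, hH, hF', hH']; ring
  · have h1 : ∑ i ∈ s, F i * m i = c * ∑ i ∈ s, m i := by
      rw [Finset.mul_sum]; exact Finset.sum_congr rfl fun i hi => by rw [H i hi]
    have h2 : ∑ i ∈ s, F i * h i = c * ∑ i ∈ s, h i := by
      rw [Finset.mul_sum]; exact Finset.sum_congr rfl fun i hi => by rw [H i hi]
    rw [h1, h2]; ring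

lemma rr_one (hsim : Equivalence sim)
    (hlen : ∀ v w : Word N, sim v w → v.length = w.length) {m : Fin N → ℝ}
    (hm : ∀ a, 0 < m a) (v w : Word N) (i : Fin N) :
    rr sim m 1 v (w ++ [i]) * massCl sim m v = if sim v w then 1 else 0 := by
  rw [show (1:ℕ) = 0 + 1 from rfl, rr_concat hsim hlen hm]
  simp only [pn]
  rw [Finset.sum_ite_eq']
  by_cases h : sim v w
  · have := (massCl_pos hsim hlen hm w).ne'
    rw [if_pos (by simpa using h), if_pos h, massCl_congr hsim m h]
    field_simp
  · rw [if_neg (by simpa using h), if_neg h]; simp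

lemma rr_eq (hsim : Equivalence sim)
    (hlen : ∀ v w : Word N, sim v w → v.length = w.length) {m : Fin N → ℝ}
    (hm : ∀ a, 0 < m a) (hB2 : B2 sim m) {d : ℝ} (hd : 0 < d) (n : ℕ) (v w : Word N) :
    rr sim m (n+1) v w * massCl sim m v =
      rr sim (fun _ => d) (n+1) v w * massCl sim (fun _ => d) v := by
  have hd' : ∀ a : Fin N, 0 < (fun _ : Fin N => d) a := fun _ => hd
  induction n generalizing w with
  | zero =>
    rcases List.eq_nil_or_concat' w with rfl | ⟨w, i, rfl⟩
    · simp [rr_nil]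
    · rw [zero_add, rr_one hsim hlen hm, rr_one hsim hlen hd']
  | succ n ih =>
    rcases List.eq_nil_or_concat' w with rfl | ⟨w, i, rfl⟩
    · simp [rr_nil]
    · rw [rr_concat' hsim hlen hm, rr_concat' hsim hlen hd', div_mul_eq_mul_div,
        div_mul_eq_mul_div, Finset.sum_mul, Finset.sum_mul]
      rw [Finset.sum_congr rfl (g := fun u =>
        (rr sim (fun _ => d) (n+1) v u * massCl sim (fun _ => d) v) * mW m u)
        (fun u _ => by rw [← ih u]; ring)]
      rw [Finset.sum_congr (f := fun u => rr sim (fun _ => d) (n+1) v u *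
        mW (fun _ => d) u * massCl sim (fun _ => d) v) rfl (g := fun u =>
        (rr sim (fun _ => d) (n+1) v u * massCl sim (fun _ => d) v) * mW (fun _ => d) u)
        (fun u _ => by ring)]
      have hne : (cls_finite hlen w).toFinset.Nonempty := ⟨w, by simpa using hsim.refl w⟩
      have hh : ∀ u ∈ (cls_finite hlen w).toFinset,
          mW (fun _ : Fin N => d) u = d ^ w.length := by
        intro u hu
        rw [← hlen u w (by simpa using hu)]
        simp [mW]
      rcases hB2 w with H | H
      · exact avg hne _ _ _ (mW_pos hm) (pow_pos hd _) hh
          (Or.inl fun u hu => H u (by simpa using hu))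
      · refine avg hne _ _ _ (mW_pos hm) (pow_pos hd _) hh
          (Or.inr (fun u hu => ?_) : _ ∨ ∀ u ∈ _, _ = 
            rr sim (fun _ => d) (n+1) v w * massCl sim (fun _ => d) v)
        have hu' : sim u w := by simpa using hu
        rw [rr_congr hsim hlen hd' n v hu' (H u hu')]

lemma rr_root (hsim : Equivalence sim)
    (hlen : ∀ v w : Word N, sim v w → v.length = w.length) {m : Fin N → ℝ}
    (hm : ∀ a, 0 < m a) (w : Word N) : rr sim m w.length [] w = 1 := by
  generalize hn : w.length = n
  induction n generalizing w with
  | zero =>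
    rw [List.length_eq_zero_iff] at hn
    subst hn
    simp [rr, pn, mW]
  | succ n ih =>
    rcases List.eq_nil_or_concat' w with rfl | ⟨w, i, rfl⟩
    · simp at hn
    · rw [rr_concat' hsim hlen hm]
      have hn' : w.length = n := by simpa using hn
      have hne : (cls_finite hlen w).toFinset.Nonempty := ⟨w, by simpa using hsim.refl w⟩
      have e1 := (Finset.sum_pos (fun i _ => mW_pos hm i) hne).ne'
      rw [Finset.sum_congr rfl (g := fun u => mW m u), div_self e1]
      intro u hu
      rw [ih u ((hlen u w (by simpa using hu)).trans hn'), one_mul]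

lemma mkernel_eq (hsim : Equivalence sim)
    (hlen : ∀ v w : Word N, sim v w → v.length = w.length) {m : Fin N → ℝ}
    (hm : ∀ a, 0 < m a) (v w : Word N) :
    mkernel sim m v w = rr sim m (w.length - v.length) v w := by
  have h := rr_root hsim hlen hm w
  unfold rr at h
  rw [div_eq_one_iff_eq (mW_pos hm w).ne'] at h
  simp [mkernel, green, rr, h]

lemma mkernel_hom (hsim : Equivalence sim)
    (hlen : ∀ v w : Word N, sim v w → v.length = w.length) {m : Fin N → ℝ}
    (hm : ∀ a, 0 < m a) (hB2 : B2 sim m) {d : ℝ} (hd : 0 < d) (v w : Word N)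
    (h : v.length < w.length) :
    mkernel sim m v w * massCl sim m v =
      mkernel sim (fun _ => d) v w * massCl sim (fun _ => d) v := by
  rw [mkernel_eq hsim hlen hm, mkernel_eq hsim hlen (fun _ => hd)]
  obtain ⟨n, hn⟩ : ∃ n, w.length - v.length = n + 1 := ⟨w.length - v.length - 1, by omega⟩
  rw [hn]
  exact rr_eq hsim hlen hm hB2 hd n v w

lemma tendsto_transfer {f g : ℕ → ℝ} {a b L : ℝ} (hb : b ≠ 0)
    (h : ∀ᶠ n in Filter.atTop, f n * a = g n * b)
    (hf : Filter.Tendsto f Filter.atTop (nhds L)) :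
    Filter.Tendsto g Filter.atTop (nhds (L * a / b)) := by
  refine ((hf.mul_const a).div_const b).congr' ?_
  filter_upwards [h] with n hn
  rw [hn, mul_div_cancel_right₀ _ hb]

end helpers

/-- Lemma 5.3: under (B2), for two sequences of words with lengths
tending to infinity along which all inhomogeneous Martin kernel limits exist, the
limits agree for every `u` iff the homogeneous limits agree for every `u`. -/
theorem eqsim_iff_eqsim_hom {N : ℕ} (hN : 2 ≤ N)
    (sim : Word N → Word N → Prop) (hsim : Equivalence sim)
    (hlen : ∀ v w : Word N, sim v w → v.length = w.length)
    (m : Fin N → ℝ) (hm : ∀ a, m a ∈ Set.Ioo (0 : ℝ) 1)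
    (hm1 : ∑ a, m a = 1) (hB2 : B2 sim m) :
    ∀ v w : ℕ → Word N,
      Filter.Tendsto (fun n => (v n).length) Filter.atTop Filter.atTop →
      Filter.Tendsto (fun n => (w n).length) Filter.atTop Filter.atTop →
      (∀ u : Word N, ∃ L : ℝ,
        Filter.Tendsto (fun n => mkernel sim m u (v n)) Filter.atTop (nhds L)) →
      (∀ u : Word N, ∃ L : ℝ,
        Filter.Tendsto (fun n => mkernel sim m u (w n)) Filter.atTop (nhds L)) →
      ((∀ u : Word N, ∃ L : ℝ,
          Filter.Tendsto (fun n => mkernel sim m u (v n)) Filter.atTop (nhds L) ∧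
          Filter.Tendsto (fun n => mkernel sim m u (w n)) Filter.atTop (nhds L)) ↔
       (∀ u : Word N, ∃ L : ℝ,
          Filter.Tendsto (fun n => mkernel sim (fun _ : Fin N => (N : ℝ)⁻¹) u (v n))
            Filter.atTop (nhds L) ∧
          Filter.Tendsto (fun n => mkernel sim (fun _ : Fin N => (N : ℝ)⁻¹) u (w n))
            Filter.atTop (nhds L))) := by
  intro v w hv hw _ _
  have hm0 : ∀ a, 0 < m a := fun a => (hm a).1
  have hd : (0:ℝ) < (N:ℝ)⁻¹ := by
    have : (0:ℝ) < N := by exact_mod_cast (by omega : 0 < N)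
    positivity
  have key : ∀ (u : Word N) (x : ℕ → Word N),
      Filter.Tendsto (fun n => (x n).length) Filter.atTop Filter.atTop →
      ∀ᶠ n in Filter.atTop, mkernel sim m u (x n) * massCl sim m u =
        mkernel sim (fun _ => (N:ℝ)⁻¹) u (x n) * massCl sim (fun _ => (N:ℝ)⁻¹) u := by
    intro u x hx
    filter_upwards [hx.eventually_gt_atTop u.length] with n hn
    exact mkernel_hom hsim hlen hm0 hB2 hd u (x n) hn
  have p1 := fun u => (massCl_pos hsim hlen hm0 u).ne'
  have p2 := fun u => (massCl_pos hsim hlen (m := fun _ => (N:ℝ)⁻¹) (fun _ => hd) u).ne'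
  constructor
  · intro H u
    obtain ⟨L, h1, h2⟩ := H u
    exact ⟨_, tendsto_transfer (p2 u) (key u v hv) h1, tendsto_transfer (p2 u) (key u w hw) h2⟩
  · intro H u
    obtain ⟨L, h1, h2⟩ := H u
    exact ⟨_, tendsto_transfer (p1 u) ((key u v hv).mono fun _ h => h.symm) h1,
      tendsto_transfer (p1 u) ((key u w hw).mono fun _ h => h.symm) h2⟩

end Martin
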